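/- Let R be a K-vector space and M the recursive brace operation on R-decorated planar rooted trees. For every decorated tree t and decorated trees s_1,…,s_n, M(t; s_1⋯s_n) equals the sum of all decorated trees obtained by grafting s_1,…,s_n onto vertices of t, in all possible ways such that in the resulting planar tree the grafted subtrees s_1,…,s_n appear in left-to-right order. -/

import Mathlib

/-! Common setup: `R`-decorated planar rooted trees, decorated forests,
the free module `R^𝒯` they span, and the Loday–Ronco product on `T(R^𝒯)`
induced by the recursive brace operation `M(B₊ˣ(f₁); f₂) = B₊ˣ(f₁ ⋆ f₂)`. -/

/-- Planar rooted trees with vertices decorated by elements of `R`. -/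
inductive PTree (R : Type*) : Type _
  | node : R → List (PTree R) → PTree R

section

variable (K : Type*) [Field K]
variable {R : Type*}

/-- All splittings of a list into a prefix and a suffix. -/
def splits {α : Type*} (l : List α) : List (List α × List α) :=
  (List.range (l.length + 1)).map fun i => (l.take i, l.drop i)

/-- All factorizations of a list into `k` (possibly empty) consecutive factors. -/
def splitsN {α : Type*} : ℕ → List α → List (List (List α))
  | 0, l => if l.isEmpty then [[]] else []
  | k + 1, l => (splits l).flatMap fun p => (splitsN k p.2).map fun r => p.1 :: r

/-- Decorated forests: words of decorated trees. -/
abbrev Forest (R : Type*) := List (PTree R)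

/-- `B₊ˣ` : grafting of a decorated forest onto a new root decorated by `x`. -/
def Bplus (x : R) (f : Forest R) : PTree R := PTree.node x f

variable (R)

/-- The space `R^𝒯` spanned by the decorated trees. -/
abbrev TreeMod := PTree R →₀ K

/-- The space `T(R^𝒯)` of decorated forests. -/
abbrev ForestMod := Forest R →₀ K

variable {R K}

/-- The element of `T(R^𝒯)` obtained from a word whose letters are linear
combinations of decorated trees, expanding multilinearly (in particular a word
containing the letter `0` gives `0`). -/
noncomputable def wordOf : List (TreeMod K R) → ForestMod K R
  | [] => Finsupp.single ([] : Forest R) 1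
  | a :: rest => a.sum fun t c => c • Finsupp.mapDomain (List.cons t) (wordOf rest)

/-- Extension `M(F;G)` of the brace operation to pairs of forests:
`M(1;1) = 0`, `M(1;s) = s` and `M(t;G) = M(t;G)` for a single tree `t`
(so `M(t;1) = t`), `M(F;G) = 0` if `F` has more than one tree. -/
noncomputable def MextF (Mh : PTree R → Forest R → TreeMod K R) : Forest R → Forest R → TreeMod K R
  | [], [] => 0
  | [], [s] => Finsupp.single s 1
  | [], _ :: _ :: _ => 0
  | [t], ys => Mh t ys
  | _ :: _ :: _, _ => 0

/-- The Loday–Ronco product `X ⋆ Y = Σ_{k≥1} Σ_{X=X¹⋯X^k, Y=Y¹⋯Y^k}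
M(X¹;Y¹)⋯M(X^k;Y^k)` built from a brace operation `Mh` on decorated trees
(with `1 ⋆ 1 = 1`; the terms with `k > |X| + |Y|` vanish, each containing the
letter `M(1;1) = 0`). -/
noncomputable def starRHS (Mh : PTree R → Forest R → TreeMod K R) : Forest R → Forest R → ForestMod K R
  | [], [] => Finsupp.single ([] : Forest R) 1
  | X, Y =>
    ((List.range (X.length + Y.length)).flatMap fun k =>
      (splitsN (k + 1) X).flatMap fun Xs =>
        (splitsN (k + 1) Y).map fun Ys =>
          wordOf (List.zipWith (MextF Mh) Xs Ys)).sum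

/-- `Mh` and `star` satisfy the defining recursion of the brace operation on
decorated trees: `M(B₊ˣ(f₁); f₂) = B₊ˣ(f₁ ⋆ f₂)` (with `B₊ˣ` extended linearly),
where `⋆` is the Loday–Ronco product built from `Mh`. -/
def IsTreeBrace (Mh : PTree R → Forest R → TreeMod K R)
    (star : Forest R → Forest R → ForestMod K R) : Prop :=
  (∀ (x : R) (f₁ f₂ : Forest R),
      Mh (Bplus x f₁) f₂ = Finsupp.mapDomain (Bplus x) (star f₁ f₂)) ∧
  (∀ X Y : Forest R, star X Y = starRHS Mh X Y)

end

section

variable {K : Type*} [Field K] {R : Type*}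

mutual
/-- All trees obtained by grafting the ordered trees `ss` onto vertices of `t`,
in all possible ways preserving the left-to-right order of the `ss` in the
resulting planar tree (each way listed once). -/
def graftT : PTree R → List (PTree R) → List (PTree R)
  | PTree.node x cs, ss => (graftF cs ss).map (PTree.node x)

/-- All forests obtained from the forest `cs` by inserting each tree of `ss`
among the trees of `cs` or grafting it onto one of their vertices, in all
possible order-preserving ways. -/
def graftF : List (PTree R) → List (PTree R) → List (List (PTree R))
  | [], ss => [ss]
  | c :: cs, ss =>
      (splits ss).flatMap fun p =>
        (splits p.2).flatMap fun p2 =>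
          (graftT c p2.1).flatMap fun c' =>
            (graftF cs p2.2).map fun tail => p.1 ++ c' :: tail
end

/-- Sum of `f` over a list. -/
def lsum {α M : Type*} [AddCommMonoid M] (l : List α) (f : α → M) : M := (l.map f).sum

section lsumLemmas
variable {α β M N : Type*} [AddCommMonoid M] [AddCommMonoid N]

theorem lsum_nil (f : α → M) : lsum [] f = 0 := by simp [lsum]

theorem lsum_cons (a : α) (l : List α) (f : α → M) : lsum (a :: l) f = f a + lsum l f := by
  simp [lsum]

theorem lsum_append (l l' : List α) (f : α → M) : lsum (l ++ l') f = lsum l f + lsum l' f := by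
  simp [lsum]

theorem lsum_map (g : β → α) (l : List β) (f : α → M) :
    lsum (l.map g) f = lsum l fun b => f (g b) := by
  simp [lsum, Function.comp_def]

theorem lsum_flatMap (g : β → List α) (l : List β) (f : α → M) :
    lsum (l.flatMap g) f = lsum l fun b => lsum (g b) f := by
  induction l with
  | nil => simp [lsum]
  | cons b l ih => rw [List.flatMap_cons, lsum_append, lsum_cons, ih]

theorem lsum_zero (l : List α) : lsum l (fun _ => (0 : M)) = 0 := by
  simp [lsum]

theorem lsum_add (l : List α) (f g : α → M) :
    lsum l (fun a => f a + g a) = lsum l f + lsum l g := by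
  simp [lsum, List.sum_map_add]

theorem lsum_comm (l : List α) (l' : List β) (f : α → β → M) :
    lsum l (fun a => lsum l' (f a)) = lsum l' (fun b => lsum l (fun a => f a b)) := by
  induction l with
  | nil => simp [lsum]
  | cons a l ih => simp only [lsum_cons, ih, lsum_add]

theorem lsum_congr (l : List α) (f g : α → M) (h : ∀ a ∈ l, f a = g a) : lsum l f = lsum l g := by
  unfold lsum
  rw [List.map_congr_left h]

theorem lsum_hom (φ : M →+ N) (l : List α) (f : α → M) :
    φ (lsum l f) = lsum l fun a => φ (f a) := by
  induction l with
  | nil => simp [lsum]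
  | cons a l ih => simp only [lsum_cons, map_add, ih]

theorem splits_nil : splits ([] : List α) = [([], [])] := rfl

theorem splits_cons (a : α) (l : List α) :
    splits (a :: l) = ([], a :: l) :: (splits l).map fun p => (a :: p.1, p.2) := by
  unfold splits
  rw [List.length_cons, List.range_succ_eq_map]
  simp [Function.comp_def]

theorem splits_mem (l : List α) (p : List α × List α) (hp : p ∈ splits l) :
    p.1.length + p.2.length = l.length := by
  unfold splits at hp
  obtain ⟨i, hi, rfl⟩ := List.mem_map.1 hp
  simp at hi ⊢
  omega

theorem lsum_splits_nil (l : List α) (f : List α × List α → M)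
    (h : ∀ a u v, f (a :: u, v) = 0) : lsum (splits l) f = f ([], l) := by
  cases l with
  | nil => simp [splits_nil, lsum]
  | cons a l =>
    rw [splits_cons, lsum_cons, lsum_map]
    simp [h, lsum_zero]

end lsumLemmas

/-- Bilinear prepending of a letter. -/
noncomputable def consL : TreeMod K R →+ ForestMod K R →+ ForestMod K R :=
  Finsupp.liftAddHom fun t =>
    { toFun := fun c => 
        { toFun := fun w => c • Finsupp.mapDomain (List.cons t) w
          map_zero' := by simp
          map_add' := by intro a b; rw [Finsupp.mapDomain_add, smul_add] }
      map_zero' := AddMonoidHom.ext fun w => zero_smul K (Finsupp.mapDomain (List.cons t) w)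
      map_add' := fun a b => AddMonoidHom.ext fun w => add_smul a b (Finsupp.mapDomain (List.cons t) w) }

theorem consL_apply (a : TreeMod K R) (w : ForestMod K R) :
    consL a w = a.sum fun t c => c • Finsupp.mapDomain (List.cons t) w := by
  simp [consL, Finsupp.liftAddHom_apply, Finsupp.sum, AddMonoidHom.finsetSum_apply]

theorem consL_single (t : PTree R) (f : Forest R) :
    consL (Finsupp.single t (1 : K)) (Finsupp.single f 1) = Finsupp.single (t :: f) 1 := by
  rw [consL_apply]
  simp

theorem wordOf_cons (a : TreeMod K R) (l : List (TreeMod K R)) :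
    wordOf (a :: l) = consL a (wordOf l) := by
  rw [consL_apply]; rfl

/-- The part of the Loday-Ronco product with exactly `k` factors. -/
noncomputable def Wpart (Mh : PTree R → Forest R → TreeMod K R) :
    ℕ → Forest R → Forest R → ForestMod K R
  | 0, [], [] => Finsupp.single [] 1
  | 0, _, _ => 0
  | k + 1, X, Y => lsum (splits X) fun p => lsum (splits Y) fun q =>
      consL (MextF Mh p.1 q.1) (Wpart Mh k p.2 q.2)

theorem Wpart_eq (Mh : PTree R → Forest R → TreeMod K R) (k : ℕ) (X Y : Forest R) :
    Wpart Mh k X Y = lsum (splitsN k X) fun Xs => lsum (splitsN k Y) fun Ys =>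
      wordOf (List.zipWith (MextF Mh) Xs Ys) := by
  induction k generalizing X Y with
  | zero => cases X <;> cases Y <;> simp [Wpart, splitsN, lsum, wordOf]
  | succ k ih =>
    simp only [Wpart, splitsN, lsum_flatMap, lsum_map, List.zipWith_cons_cons, wordOf_cons, ih,
      lsum_hom]
    refine lsum_congr _ _ _ fun p _ => ?_
    rw [lsum_comm]

/-- The sum of the parts with less than `N` factors. -/
noncomputable def Tpart (Mh : PTree R → Forest R → TreeMod K R) :
    ℕ → Forest R → Forest R → ForestMod K R
  | 0, _, _ => 0
  | N + 1, X, Y => Wpart Mh 0 X Y + lsum (splits X) fun p => lsum (splits Y) fun q =>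
      consL (MextF Mh p.1 q.1) (Tpart Mh N p.2 q.2)

theorem Tpart_eq (Mh : PTree R → Forest R → TreeMod K R) (N : ℕ) (X Y : Forest R) :
    Tpart Mh N X Y = lsum (List.range N) fun k => Wpart Mh k X Y := by
  induction N generalizing X Y with
  | zero => simp [Tpart, lsum]
  | succ N ih =>
    rw [List.range_succ_eq_map, lsum_cons, lsum_map]
    simp only [Tpart, Wpart, ih, lsum_hom]
    congr 1
    rw [lsum_comm (List.range N)]
    refine lsum_congr _ _ _ fun p _ => ?_
    rw [lsum_comm (List.range N)]

theorem starRHS_eq (Mh : PTree R → Forest R → TreeMod K R) (X Y : Forest R) :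
    starRHS Mh X Y = Tpart Mh (X.length + Y.length + 1) X Y := by
  have key : ∀ X Y : Forest R, Wpart Mh 0 X Y = 0 →
      ((List.range (X.length + Y.length)).flatMap fun k =>
      (splitsN (k + 1) X).flatMap fun Xs =>
        (splitsN (k + 1) Y).map fun Ys =>
          wordOf (List.zipWith (MextF Mh) Xs Ys)).sum = 
      Tpart Mh (X.length + Y.length + 1) X Y := by
    intro X Y h0
    rw [Tpart_eq, List.range_succ_eq_map, lsum_cons, lsum_map, h0, zero_add]
    have e : ∀ l : List (ForestMod K R), l.sum = lsum l id := fun l => by simp [lsum]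
    rw [e]
    simp only [lsum_flatMap, lsum_map, Nat.succ_eq_add_one, Wpart_eq, id]
  cases X with
  | nil =>
    cases Y with
    | nil => simp [starRHS, Tpart, Wpart, splits_nil, lsum, MextF]
    | cons y Y => exact key _ _ rfl
  | cons x X => exact key _ _ (by cases Y <;> rfl)

/-- Sum of the graftings onto a forest. -/
noncomputable def Gsum (X Y : Forest R) : ForestMod K R :=
  lsum (graftF X Y) fun f => Finsupp.single f 1

theorem Gsum_nil (Y : Forest R) : Gsum (K := K) [] Y = Finsupp.single Y 1 := by
  simp [Gsum, graftF, lsum]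

theorem Gsum_cons (c : PTree R) (cs ss : Forest R) :
    Gsum (K := K) (c :: cs) ss = 
      (match ss with
        | [] => 0
        | y :: ss' => consL (Finsupp.single y (1 : K)) (Gsum (c :: cs) ss')) +
      lsum (splits ss) fun q =>
        consL (lsum (graftT c q.1) fun u => Finsupp.single u (1 : K)) (Gsum cs q.2) := by
  have h2 : ∀ q : Forest R × Forest R,
      consL (lsum (graftT c q.1) fun u => Finsupp.single u (1 : K)) (Gsum cs q.2) =
      lsum (graftT c q.1) fun u => lsum (graftF cs q.2) fun f => Finsupp.single (u :: f) 1 := by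
    intro q
    rw [Gsum, lsum_hom, lsum_comm]
    refine lsum_congr _ _ _ fun f _ => ?_
    rw [← AddMonoidHom.flip_apply, lsum_hom]
    refine lsum_congr _ _ _ fun u _ => ?_
    rw [AddMonoidHom.flip_apply, consL_single]
  simp only [h2]
  cases ss with
  | nil =>
    simp only [Gsum, graftF, lsum_flatMap, lsum_map, splits_nil, lsum_cons, lsum_nil]
    simp
  | cons y ss =>
    rw [add_comm]
    simp only [Gsum, graftF, lsum_flatMap, lsum_map]
    conv_lhs => rw [splits_cons, lsum_cons, lsum_map]
    simp only [lsum_hom, consL_single, List.nil_append, List.cons_append]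

theorem lsum_Mext_nil (Mh : PTree R → Forest R → TreeMod K R) (Y : Forest R)
    (F : Forest R → ForestMod K R) :
    (lsum (splits Y) fun q => consL (MextF Mh [] q.1) (F q.2)) =
      match Y with
        | [] => 0
        | y :: Y' => consL (Finsupp.single y 1) (F Y') := by
  cases Y with
  | nil => simp [splits_nil, lsum, MextF]
  | cons y Y =>
    rw [splits_cons, lsum_cons, lsum_map, lsum_splits_nil]
    · simp [MextF]
    · intro a u v
      simp [MextF]

theorem Tpart_Gsum (Mh : PTree R → Forest R → TreeMod K R) (N : ℕ) (X Y : Forest R)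
    (hN : X.length + Y.length < N)
    (hX : ∀ x ∈ X, ∀ ss, Mh x ss = lsum (graftT x ss) fun u => Finsupp.single u (1 : K)) :
    Tpart Mh N X Y = Gsum X Y := by
  induction N generalizing X Y with
  | zero => omega
  | succ N ih =>
    cases X with
    | nil =>
      rw [Gsum_nil, Tpart, splits_nil, lsum_cons, lsum_nil, lsum_Mext_nil]
      cases Y with
      | nil => simp [Wpart]
      | cons y Y =>
        simp only
        rw [ih _ _ (by simp at hN ⊢; omega) (by simp), Gsum_nil, consL_single]
        simp [Wpart]
    | cons x X =>
      have h0 : Wpart Mh 0 (x :: X) Y = 0 := by cases Y <;> rfl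
      rw [Gsum_cons, Tpart, h0, zero_add, splits_cons, lsum_cons, lsum_map, lsum_Mext_nil,
        lsum_splits_nil]
      · congr 1
        · cases Y with
          | nil => rfl
          | cons y Y =>
            simp only
            rw [ih _ _ (by simp at hN ⊢; omega) hX]
        · refine lsum_congr _ _ _ fun q hq => ?_
          have := splits_mem _ _ hq
          rw [ih _ _ (by simp at hN ⊢; omega) fun z hz => hX z (List.mem_cons_of_mem _ hz)]
          rw [← hX x List.mem_cons_self]
          simp [MextF]
      · intro a u v
        simp [MextF, lsum_zero]

theorem brace_aux (Mh : PTree R → Forest R → TreeMod K R)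
    (star : Forest R → Forest R → ForestMod K R)
    (h : IsTreeBrace Mh star) : (t : PTree R) →
    ∀ ss : Forest R, Mh t ss = lsum (graftT t ss) fun u => Finsupp.single u (1 : K)
  | PTree.node x cs => by
    have hX : ∀ c ∈ cs, ∀ ss, Mh c ss = lsum (graftT c ss) fun u => Finsupp.single u (1 : K) :=
      fun c hc => brace_aux Mh star h c
    intro ss
    have h1 := h.1 x cs ss
    rw [h.2, starRHS_eq, Tpart_Gsum Mh _ _ _ (Nat.lt_succ_self _) hX] at h1
    have h2 : Mh (PTree.node x cs) ss = Finsupp.mapDomain.addMonoidHom (Bplus x) (Gsum cs ss) := h1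
    rw [h2, Gsum, lsum_hom, graftT, lsum_map]
    refine lsum_congr _ _ _ fun f _ => ?_
    exact Finsupp.mapDomain_single
termination_by t => sizeOf t

/-- Let `R` be a `K`-vector space and `M` the recursive brace
operation on `R`-decorated planar rooted trees.  For every decorated tree `t` and
decorated trees `s₁,…,sₙ`, `M(t; s₁⋯sₙ)` equals the sum of all decorated trees
obtained by grafting `s₁,…,sₙ` onto vertices of `t`, in all possible ways such
that in the resulting planar tree the grafted subtrees `s₁,…,sₙ` appear in
left-to-right order. -/
theorem tree_brace_is_sum_of_graftings
    (Mh : PTree R → Forest R → TreeMod K R)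
    (star : Forest R → Forest R → ForestMod K R)
    (h : IsTreeBrace Mh star) :
    ∀ (t : PTree R) (ss : List (PTree R)),
      Mh t ss = ((graftT t ss).map fun u => Finsupp.single u (1 : K)).sum := by
  intro t ss
  exact brace_aux Mh star h t ss

end
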